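/- Let ℓ be a positive integer. A complex number x satisfies Q(x) = 0 if and only if there exists a complex number z with z^ℓ = 1 and x = z + z⁻¹. -/

import Mathlib

open Polynomial

/-- The Chebyshev polynomials of the second kind `P j`, defined by
`P 0 = 0`, `P 1 = 1`, `P (j+2) = X * P (j+1) - P j`. -/
noncomputable def chebP (R : Type*) [CommRing R] : ℕ → Polynomial R
  | 0 => 0
  | 1 => 1
  | (j + 2) => X * chebP R (j + 1) - chebP R j

/-- The polynomial `Q = X * P ℓ - 2 * P (ℓ-1) - 2`. -/
noncomputable def chebQ (R : Type*) [CommRing R] (ℓ : ℕ) : Polynomial R :=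
  X * chebP R ℓ - 2 * chebP R (ℓ - 1) - 2

/-!
Substituting `x = z + z⁻¹` turns the recursion of the `P j` into that of a sum of powers: `Q + 2` is
the rescaled Chebyshev polynomial of the first kind, so `Q (z + z⁻¹) = z ^ ℓ + z ^ (-ℓ) - 2`. Since
`a + a⁻¹ - 2 = a⁻¹ * (a - 1) ^ 2`, this vanishes exactly when `z ^ ℓ = 1`. Over an algebraically
closed field every `x` has the form `z + z⁻¹`, with `z` a root of `X ^ 2 - x * X + 1`.
-/

section CommRing

variable {R : Type*} [CommRing R]

theorem chebP_eq_chebyshev_S (n : ℕ) : chebP R n = Chebyshev.S R (n - 1) := by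
  induction n using Nat.twoStepInduction with
  | zero => simp [chebP]
  | one => simp [chebP]
  | more n ih₀ ih₁ =>
    have index_one : ((n + 1 : ℕ) : ℤ) - 1 = (n - 1) + 1 := by omega
    have index_two : ((n + 2 : ℕ) : ℤ) - 1 = (n - 1) + 2 := by omega
    rw [chebP, ih₀, ih₁, index_one, index_two, Chebyshev.S_add_two]

theorem chebQ_eq_chebyshev_C_sub_two {ℓ : ℕ} (hℓ : 1 ≤ ℓ) :
    chebQ R ℓ = Chebyshev.C R ℓ - 2 := by
  have C_eq := Chebyshev.C_eq_S_sub_X_mul_S R ℓ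
  have S_recursion := Chebyshev.S_eq R ℓ
  have pred_index : ((ℓ - 1 : ℕ) : ℤ) - 1 = ℓ - 2 := by omega
  rw [chebQ, chebP_eq_chebyshev_S, chebP_eq_chebyshev_S, pred_index]
  linear_combination -C_eq - 2 * S_recursion

theorem chebQ_eval_add {ℓ : ℕ} (hℓ : 1 ≤ ℓ) {z w : R} (hzw : z * w = 1) :
    (chebQ R ℓ).eval (z + w) = z ^ ℓ + w ^ ℓ - 2 := by
  rw [chebQ_eq_chebyshev_C_sub_two hℓ, ← dickson_one_one_eq_chebyshev_C, eval_sub,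
    dickson_one_one_eval_add_inv z w hzw, eval_ofNat]

theorem add_eq_two_iff_of_mul_eq_one [IsReduced R] {a b : R} (hab : a * b = 1) :
    a + b = 2 ↔ a = 1 := by
  constructor
  · intro hsum
    have hsq : (a - 1) ^ 2 = 0 := by linear_combination a * hsum - hab
    exact sub_eq_zero.mp (eq_zero_of_pow_eq_zero hsq)
  · rintro rfl
    linear_combination hab

theorem chebQ_eval_add_eq_zero_iff [IsReduced R] {ℓ : ℕ} (hℓ : 1 ≤ ℓ) {z w : R}
    (hzw : z * w = 1) : (chebQ R ℓ).eval (z + w) = 0 ↔ z ^ ℓ = 1 := by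
  have hpow : z ^ ℓ * w ^ ℓ = 1 := by rw [← mul_pow, hzw, one_pow]
  rw [chebQ_eval_add hℓ hzw, sub_eq_zero, add_eq_two_iff_of_mul_eq_one hpow]

end CommRing

section IsAlgClosed

variable {K : Type*} [Field K] [IsAlgClosed K]

theorem exists_ne_zero_eq_add_inv (x : K) : ∃ z : K, z ≠ 0 ∧ x = z + z⁻¹ := by
  have hdeg : (X ^ 2 - C x * X + 1 : K[X]).degree = 2 := by compute_degree!
  obtain ⟨z, hroot⟩ := IsAlgClosed.exists_root (X ^ 2 - C x * X + 1) (by simp [hdeg])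
  have hz : z ^ 2 - x * z + 1 = 0 := by simpa using hroot
  have hz0 : z ≠ 0 := by
    rintro rfl
    simp at hz
  refine ⟨z, hz0, ?_⟩
  field_simp
  linear_combination -hz

theorem stmt_3_general {ℓ : ℕ} (hℓ : 1 ≤ ℓ) (x : K) :
    (chebQ K ℓ).eval x = 0 ↔ ∃ z : K, z ^ ℓ = 1 ∧ x = z + z⁻¹ := by
  constructor
  · intro hQ
    obtain ⟨z, hz0, rfl⟩ := exists_ne_zero_eq_add_inv x
    exact ⟨z, (chebQ_eval_add_eq_zero_iff hℓ (mul_inv_cancel₀ hz0)).mp hQ, rfl⟩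
  · rintro ⟨z, hz, rfl⟩
    have hz0 : z ≠ 0 := (IsUnit.of_pow_eq_one hz (by omega)).ne_zero
    exact (chebQ_eval_add_eq_zero_iff hℓ (mul_inv_cancel₀ hz0)).mpr hz

end IsAlgClosed

theorem stmt_3 (ℓ : ℕ) (hℓ : 1 ≤ ℓ) (x : ℂ) :
    (chebQ ℂ ℓ).eval x = 0 ↔ ∃ z : ℂ, z ^ ℓ = 1 ∧ x = z + z⁻¹ :=
  stmt_3_general hℓ x
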